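/- Let X, Y, Z be integral schemes of finite type over a Noetherian scheme, with Z separated. Let f : X → Y be a proper morphism such that the natural map 𝒪_Y → f_*𝒪_X is an isomorphism, and let g : X → Z be a morphism such that, for some point y ∈ Y, the image g(f⁻¹(y)) consists of a single point of Z. Then there exists an open neighborhood U of y in Y and a morphism h : U → Z such that the restriction of g to f⁻¹(U) equals h composed with the restriction of f. -/

import Mathlib

open AlgebraicGeometry CategoryTheory

/-!
A point of `Z` has an affine open neighbourhood `V`. If `V` contains `g(f⁻¹(y))`, then, `f` being
closed, `f⁻¹(U) ⊆ g⁻¹(V)` for some open neighbourhood `U` of `y`. Morphisms into the affine scheme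
`V` correspond to ring maps out of `𝒪(V)`, and `𝒪(U) ≅ 𝒪(f⁻¹(U))`, so `g` restricted to `f⁻¹(U)`
descends to `U`.
-/

theorem exists_opens_mem_and_preimage_subset_of_isClosedMap {α β : Type*} [TopologicalSpace α]
    [TopologicalSpace β] {f : α → β} (hf : IsClosedMap f) {s : Set α} (hs : IsOpen s) {y : β}
    (hy : f ⁻¹' {y} ⊆ s) : ∃ U : TopologicalSpace.Opens β, y ∈ U ∧ f ⁻¹' U ⊆ s :=
  ⟨⟨Set.kernImage f s, isClosedMap_iff_kernImage.mp hf hs⟩, fun _ hx => hy hx,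
    Set.subset_kernImage_iff.mp subset_rfl⟩

theorem exists_comp_eq_of_isAffine_of_isIso_appTop {X Y Z : Scheme} [IsAffine Z] (f : X ⟶ Y)
    [IsIso f.appTop] (g : X ⟶ Z) : ∃ h : Y ⟶ Z, f ≫ h = g :=
  ⟨Y.toSpecΓ ≫ inv (Spec.map f.appTop) ≫ Spec.map g.appTop ≫ inv Z.toSpecΓ, by
    rw [Scheme.toSpecΓ_naturality_assoc, IsIso.hom_inv_id_assoc,
      ← Scheme.toSpecΓ_naturality_assoc, IsIso.hom_inv_id, Category.comp_id]⟩

theorem isIso_appTop_morphismRestrict {X Y : Scheme} (f : X ⟶ Y) (U : Y.Opens)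
    [IsIso (f.app U)] : IsIso (f ∣_ U).appTop := by
  have : IsIso (f.app (U.ι ''ᵁ ⊤)) := by rwa [U.ι_image_top]
  rw [morphismRestrict_appTop]
  exact IsIso.comp_isIso' this (Functor.map_isIso _ _)

theorem exists_ι_comp_eq_morphismRestrict_comp {X Y Z : Scheme} (f : X ⟶ Y) (g : X ⟶ Z)
    {U : Y.Opens} [IsIso (f.app U)] {V : Z.Opens} (hV : IsAffineOpen V)
    (hUV : f ⁻¹ᵁ U ≤ g ⁻¹ᵁ V) :
    ∃ h : (U : Scheme) ⟶ Z, (f ⁻¹ᵁ U).ι ≫ g = (f ∣_ U) ≫ h := by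
  have : IsAffine V := hV
  have : IsIso (f ∣_ U).appTop := isIso_appTop_morphismRestrict f U
  obtain ⟨h, hh⟩ :=
    exists_comp_eq_of_isAffine_of_isIso_appTop (f ∣_ U) (g.resLE V (f ⁻¹ᵁ U) hUV)
  exact ⟨h ≫ V.ι, by rw [reassoc_of% hh, Scheme.Hom.resLE_comp_ι]⟩

theorem rigidity_lemma_local_general {X Y Z : Scheme} (f : X ⟶ Y) (hf : IsClosedMap f)
    (hO : ∀ U : Y.Opens, IsIso (f.app U)) (g : X ⟶ Z) {y : Y} {V : Z.Opens}
    (hV : IsAffineOpen V) (hy : g '' (f ⁻¹' {y}) ⊆ V) :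
    ∃ U : Y.Opens, y ∈ U ∧ ∃ h : (U : Scheme) ⟶ Z,
      (f ⁻¹ᵁ U).ι ≫ g = (f ∣_ U) ≫ h := by
  obtain ⟨U, hyU, hUV⟩ := exists_opens_mem_and_preimage_subset_of_isClosedMap hf
    (V.isOpen.preimage g.continuous) (Set.image_subset_iff.mp hy)
  exact ⟨U, hyU, exists_ι_comp_eq_morphismRestrict_comp f g hV hUV⟩

/-- **Rigidity Lemma, local form.** Let `X, Y, Z` be integral schemes of finite type over a
Noetherian scheme `S`, with `Z` separated (over `S`). Let `f : X ⟶ Y` be a proper morphism such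
that the natural map `𝒪_Y → f_* 𝒪_X` is an isomorphism (i.e. `f.app U` is an isomorphism for
every open `U ⊆ Y`), and let `g : X ⟶ Z` be a morphism such that the image `g(f⁻¹(y))` is a
single point for some `y ∈ Y`. Then there is an open neighbourhood `U` of `y` and a morphism
`h : U ⟶ Z` with `g` restricted to `f⁻¹(U)` equal to `h` composed with the restriction of `f`. -/
theorem rigidity_lemma_local
    (S X Y Z : Scheme) [AlgebraicGeometry.IsNoetherian S]
    [IsIntegral X] [IsIntegral Y] [IsIntegral Z]
    (sX : X ⟶ S) (sY : Y ⟶ S) (sZ : Z ⟶ S)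
    [LocallyOfFiniteType sX] [QuasiCompact sX]
    [LocallyOfFiniteType sY] [QuasiCompact sY]
    [LocallyOfFiniteType sZ] [QuasiCompact sZ]
    [IsSeparated sZ]
    (f : X ⟶ Y) [IsProper f] (hfS : f ≫ sY = sX)
    (hO : ∀ U : Y.Opens, IsIso (f.app U))
    (g : X ⟶ Z) (hgS : g ≫ sZ = sX)
    (y : Y) (hy : ∃ z : Z, g.base '' (f.base ⁻¹' {y}) = {z}) :
    ∃ U : Y.Opens, y ∈ U ∧ ∃ h : (U : Scheme) ⟶ Z,
      (f ⁻¹ᵁ U).ι ≫ g = (f ∣_ U) ≫ h := by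
  obtain ⟨z, hz⟩ := hy
  obtain ⟨V, hV, hzV, -⟩ := exists_isAffineOpen_mem_and_subset (TopologicalSpace.Opens.mem_top z)
  exact rigidity_lemma_local_general f f.isClosedMap hO g hV
    (hz.subset.trans (Set.singleton_subset_iff.mpr hzV))
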